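/- Let G be a finite simple graph on n vertices in which every vertex has degree at most Δ, and let p = ⌊n/(Δ² + 1)⌋. Then there exist pairwise disjoint subsets R_1, …, R_p of the vertex set, each of size at most Δ + 1, and designated vertices r_i ∈ R_i, such that for every set S of at least 2 vertices for which the induced subgraph G[S] contains a Hamiltonian path, and for every i = 1, …, p: if r_i ∈ S then |S ∩ R_i| ≥ 2. -/

import Mathlib

/-!
Take each `R i` to be the closed neighbourhood of its infant `r i`, with the infants pairwise at
distance at least three, so that these neighbourhoods are disjoint.

The vertices at distance at most two from `v` number at most `Δ ^ 2 + 1`: besides `v` itself, they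
are covered by the sets `{u} ∪ (N(u) \ {v})` for `u ∈ N(v)`, each of size at most `Δ`
(`card_ballTwo_le`). A greedy choice therefore finds `k` infants whenever `k * (Δ ^ 2 + 1) ≤ n`
(`exists_infants`).

A path on at least two vertices visits with each vertex one of its neighbours
(`exists_adj_mem_support`), so any `S` that is the support of a path and contains `r i` also
contains a second element of `R i`.
-/

/-- The closed neighbourhood `N[v]` of `v`. -/
def closedNbhd {V : Type*} [Fintype V] [DecidableEq V] (G : SimpleGraph V) [DecidableRel G.Adj]
    (v : V) : Finset V :=
  insert v (G.neighborFinset v)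

/-- The vertices at distance at most two from `v`. Removing `v` from each `N(u)` changes nothing
in the union, but makes the union bound on its size sharp. -/
def ballTwo {V : Type*} [Fintype V] [DecidableEq V] (G : SimpleGraph V) [DecidableRel G.Adj]
    (v : V) : Finset V :=
  insert v ((G.neighborFinset v).biUnion fun u => insert u ((G.neighborFinset u).erase v))

theorem card_ballTwo_le {V : Type*} [Fintype V] [DecidableEq V] (G : SimpleGraph V) (Δ : ℕ)
    [DecidableRel G.Adj] (hdeg : ∀ v, G.degree v ≤ Δ) (v : V) :
    (ballTwo G v).card ≤ Δ ^ 2 + 1 := by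
  refine (Finset.card_insert_le _ _).trans (Nat.succ_le_succ ?_)
  have h : ∀ u ∈ G.neighborFinset v,
      (insert u ((G.neighborFinset u).erase v)).card ≤ Δ := by
    intro u hu
    have hv : v ∈ G.neighborFinset u := by
      simpa [G.adj_comm] using hu
    refine (Finset.card_insert_le _ _).trans ?_
    rw [Finset.card_erase_add_one hv, G.card_neighborFinset_eq_degree]
    exact hdeg u
  refine (Finset.card_biUnion_le_card_mul _ _ _ h).trans ?_
  rw [G.card_neighborFinset_eq_degree, sq]
  exact Nat.mul_le_mul_right _ (hdeg v)

theorem disjoint_closedNbhd {V : Type*} [Fintype V] [DecidableEq V] (G : SimpleGraph V)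
    [DecidableRel G.Adj] {u v : V} (h : v ∉ ballTwo G u) :
    Disjoint (closedNbhd G u) (closedNbhd G v) := by
  rw [Finset.disjoint_left]
  intro x hxu hxv
  apply h
  simp only [closedNbhd, ballTwo, Finset.mem_insert, SimpleGraph.mem_neighborFinset,
    Finset.mem_biUnion, Finset.mem_erase] at *
  by_cases hvu : v = u
  · exact Or.inl hvu
  · right
    rcases hxu with rfl | hxu
    · rcases hxv with rfl | hxv
      · exact absurd rfl hvu
      · exact ⟨v, hxv.symm, Or.inl rfl⟩
    · rcases hxv with rfl | hxv
      · exact ⟨x, hxu, Or.inl rfl⟩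
      · exact ⟨x, hxu, Or.inr ⟨hvu, hxv.symm⟩⟩

/-- Greedy choice of an independent set in the square of `G`. -/
theorem exists_infants {V : Type*} [Fintype V] [DecidableEq V] (G : SimpleGraph V) (Δ : ℕ)
    [DecidableRel G.Adj] (hdeg : ∀ v, G.degree v ≤ Δ) (k : ℕ)
    (hk : k * (Δ ^ 2 + 1) ≤ Fintype.card V) :
    ∃ I : Finset V, I.card = k ∧
      ∀ u ∈ I, ∀ v ∈ I, u ≠ v → Disjoint (closedNbhd G u) (closedNbhd G v) := by
  induction k with
  | zero => exact ⟨∅, by simp⟩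
  | succ k ih =>
    rw [Nat.succ_mul] at hk
    obtain ⟨I, hI, hd⟩ := ih (by omega)
    have hlt : (I.biUnion (ballTwo G)).card < (Finset.univ : Finset V).card := by
      have := Finset.card_biUnion_le_card_mul I (ballTwo G) _
        fun v _ => card_ballTwo_le G Δ hdeg v
      rw [hI] at this
      rw [Finset.card_univ]
      omega
    obtain ⟨v, -, hv⟩ := Finset.exists_mem_notMem_of_card_lt_card hlt
    have hv' : ∀ u ∈ I, Disjoint (closedNbhd G u) (closedNbhd G v) := fun u hu =>
      disjoint_closedNbhd G fun h => hv (Finset.mem_biUnion.2 ⟨u, hu, h⟩)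
    have hvI : v ∉ I := fun h =>
      hv (Finset.mem_biUnion.2 ⟨v, h, Finset.mem_insert_self _ _⟩)
    refine ⟨insert v I, by rw [Finset.card_insert_of_notMem hvI, hI], ?_⟩
    intro a ha b hb hab
    rcases Finset.mem_insert.1 ha with rfl | haI
    · rcases Finset.mem_insert.1 hb with rfl | hbI
      · exact absurd rfl hab
      · exact (hv' b hbI).symm
    · rcases Finset.mem_insert.1 hb with rfl | hbI
      · exact hv' a haI
      · exact hd a haI b hbI hab

theorem exists_adj_mem_support {V : Type*} {G : SimpleGraph V} {a b : V} (w : G.Walk a b)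
    (hw : 0 < w.length) {v : V} (hv : v ∈ w.support) : ∃ u ∈ w.support, G.Adj v u := by
  induction w with
  | nil => simp at hw
  | @cons a c b h p ih =>
    rw [SimpleGraph.Walk.support_cons, List.mem_cons] at hv
    rcases hv with rfl | hv
    · exact ⟨c, by simp, h⟩
    · by_cases hp : 0 < p.length
      · obtain ⟨u, hu, huv⟩ := ih hp hv
        exact ⟨u, by simp [hu], huv⟩
      · cases p with
        | nil =>
          simp only [SimpleGraph.Walk.support_nil, List.mem_singleton] at hv
          subst hv
          exact ⟨a, by simp, h.symm⟩
        | cons _ _ => simp at hp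


/-- Let `G` be a finite simple graph on `n` vertices of maximum degree at
most `Δ`, and let `p = ⌊n / (Δ² + 1)⌋`. Then there exist pairwise disjoint subsets
`R_1, …, R_p` of the vertex set, each of size at most `Δ + 1`, and designated vertices
`r i ∈ R i`, such that for every set `S` of at least 2 vertices for which `G[S]`
contains a Hamiltonian path, and every `i`: if `r i ∈ S` then `|S ∩ R i| ≥ 2`. -/
theorem hamiltonian_families_with_infants {V : Type*} [Fintype V] [DecidableEq V]
    (G : SimpleGraph V) (Δ : ℕ) [DecidableRel G.Adj]
    (hdeg : ∀ v, G.degree v ≤ Δ) :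
    ∃ (R : Fin (Fintype.card V / (Δ ^ 2 + 1)) → Finset V)
      (r : Fin (Fintype.card V / (Δ ^ 2 + 1)) → V),
      (∀ i j, i ≠ j → Disjoint (R i) (R j)) ∧
      (∀ i, (R i).card ≤ Δ + 1) ∧
      (∀ i, r i ∈ R i) ∧
      (∀ S : Finset V, 2 ≤ S.card →
        (∃ (a b : V) (w : G.Walk a b), w.IsPath ∧ w.support.toFinset = S) →
        ∀ i, r i ∈ S → 2 ≤ (S ∩ R i).card) := by
  obtain ⟨I, hI, hd⟩ := exists_infants G Δ hdeg _ (Nat.div_mul_le_self _ _)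
  let e := (I.equivFinOfCardEq hI).symm
  refine ⟨fun i => closedNbhd G (e i), fun i => e i, ?_, ?_, ?_, ?_⟩
  · intro i j hij
    exact hd _ (e i).2 _ (e j).2 fun h => hij (e.injective (Subtype.ext h))
  · intro i
    refine (Finset.card_insert_le _ _).trans (Nat.succ_le_succ ?_)
    rw [G.card_neighborFinset_eq_degree]
    exact hdeg _
  · intro i
    exact Finset.mem_insert_self _ _
  · rintro S hS ⟨a, b, w, -, rfl⟩ i hi
    have hw : 0 < w.length := by
      have := w.support.toFinset_card_le
      rw [w.length_support] at this
      omega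
    obtain ⟨u, hu, hadj⟩ := exists_adj_mem_support w hw (List.mem_toFinset.1 hi)
    refine Finset.one_lt_card.2 ⟨e i, ?_, u, ?_, hadj.ne⟩
    · exact Finset.mem_inter.2 ⟨hi, Finset.mem_insert_self _ _⟩
    · exact Finset.mem_inter.2 ⟨List.mem_toFinset.2 hu,
        Finset.mem_insert_of_mem ((G.mem_neighborFinset _ _).2 hadj)⟩
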